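/- Let S = {1,…,N} be a finite set, Q a conservative irreducible rate matrix on S, and B : S → ℝ. Define the operator A on functions g : S → ℝ by (Ag)(i) = B(i)g(i) + (Qg)(i). Then there exist a strictly positive function φ̄ : S → (0,∞) and a unique real number λ such that Aφ̄ = λφ̄, and λ admits the variational (Donsker–Varadhan) representation λ = sup_{π ∈ 𝒫(S)} inf_{g : S → (0,∞)} Σ_{i ∈ S} π_i (Ag)(i)/g(i) = sup_{π ∈ 𝒫(S)} ( Σ_{i ∈ S} B(i) π_i − I(π) ). -/

import Mathlib

/-!
Conservativity gives `(A g)(i) = ∑ j, Q i j * g j + B i * g i`, so for a large constant `c` the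
matrix `M` of `A + c` has nonnegative entries and is irreducible. Perron–Frobenius for such matrices
(`exists_pos_eigenvector`) is proved by the Collatz–Wielandt argument: a pair `(x, μ)` with `x` in
the simplex, `μ • x ≤ M x` and `μ` maximal exists by compactness, and if `μ • x ≠ M x` then a strictly
positive polynomial `P` in `M` improves it to `P x`.

Applied to `M` and its transpose this yields positive right and left eigenvectors `φ`, `ψ`.
Pairing with `ψ` shows that every positive right eigenvector has the same eigenvalue.

For the variational formula, `g = φ` shows that the infimum is at most `lam` for every `π`.
Equality holds for `π i ∝ ψ i * φ i`: writing `g = φ * h`, the functional exceeds `lam` by a multiple of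
`∑ ψ i * M i j * φ j * (h j / h i - 1) ≥ ∑ ψ i * M i j * φ j * (log (h j) - log (h i)) = 0`
(`le_sum_of_eigenvectors`). The second formula is the first with the term `∑ B i * π i` taken out of
the infimum.
-/

open Matrix

namespace DonskerVaradhan

variable {ι : Type*} [Fintype ι]

lemma mulVec_pos {P : Matrix ι ι ℝ} (hP : ∀ i j, 0 < P i j) {x : ι → ℝ} (hx : ∀ i, 0 ≤ x i)
    (hne : x ≠ 0) (i : ι) : 0 < (P *ᵥ x) i := by
  obtain ⟨j, hj⟩ := Function.ne_iff.mp hne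
  have hj' : 0 < x j := lt_of_le_of_ne (hx j) (Ne.symm hj)
  exact Finset.sum_pos' (fun k _ => mul_nonneg (hP i k).le (hx k))
    ⟨j, Finset.mem_univ j, mul_pos (hP i j) hj'⟩

lemma pow_nonneg_entry [DecidableEq ι] {M : Matrix ι ι ℝ} (hM : ∀ i j, 0 ≤ M i j) (k : ℕ) :
    ∀ i j, 0 ≤ (M ^ k) i j := by
  induction k with
  | zero => intro i j; rw [pow_zero, Matrix.one_apply]; split_ifs <;> norm_num
  | succ k ih =>
    intro i j
    rw [pow_succ, Matrix.mul_apply]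
    exact Finset.sum_nonneg fun l _ => mul_nonneg (ih i l) (hM l j)

/-- An irreducible nonnegative matrix commutes with an entrywise positive one: a sum of sufficiently
many of its powers. -/
lemma exists_pos_commute [DecidableEq ι] {M : Matrix ι ι ℝ} (hM : ∀ i j, 0 ≤ M i j)
    (hirr : ∀ i j, ∃ k : ℕ, 0 < (M ^ k) i j) :
    ∃ P : Matrix ι ι ℝ, (∀ i j, 0 < P i j) ∧ Commute P M := by
  choose k hk using hirr
  refine ⟨∑ n ∈ Finset.univ.image (fun p : ι × ι => k p.1 p.2), M ^ n, fun i j => ?_, ?_⟩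
  · rw [Matrix.sum_apply]
    exact Finset.sum_pos' (fun n _ => pow_nonneg_entry hM n i j)
      ⟨k i j, Finset.mem_image.mpr ⟨(i, j), Finset.mem_univ _, rfl⟩, hk i j⟩
  · exact Commute.sum_left _ _ _ fun n _ => (Commute.refl M).pow_left n

/-- Upper bound for the Collatz–Wielandt quotient of a probability vector. -/
lemma subeigenvalue_le {M : Matrix ι ι ℝ} (hM : ∀ i j, 0 ≤ M i j) {x : ι → ℝ}
    (hx : x ∈ stdSimplex ℝ ι) {μ : ℝ} (h : ∀ i, μ * x i ≤ (M *ᵥ x) i) :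
    μ ≤ ∑ i, ∑ j, M i j := by
  calc μ = ∑ i, μ * x i := by rw [← Finset.mul_sum, hx.2, mul_one]
    _ ≤ ∑ i, (M *ᵥ x) i := Finset.sum_le_sum fun i _ => h i
    _ ≤ ∑ i, ∑ j, M i j := by
      refine Finset.sum_le_sum fun i _ => Finset.sum_le_sum fun j _ => ?_
      refine mul_le_of_le_one_right (hM i j) ?_
      rw [← hx.2]
      exact Finset.single_le_sum (fun k _ => hx.1 k) (Finset.mem_univ j)

/-- Perron–Frobenius: an irreducible nonnegative matrix has a positive eigenvector. -/
lemma exists_pos_eigenvector [DecidableEq ι] [Nonempty ι] {M : Matrix ι ι ℝ}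
    (hM : ∀ i j, 0 ≤ M i j) (hirr : ∀ i j, ∃ k : ℕ, 0 < (M ^ k) i j) :
    ∃ (φ : ι → ℝ) (μ : ℝ), (∀ i, 0 < φ i) ∧ M *ᵥ φ = μ • φ := by
  obtain ⟨P, hP, hPM⟩ := exists_pos_commute hM hirr
  set C := ∑ i, ∑ j, M i j with hC
  have hC0 : 0 ≤ C := Finset.sum_nonneg fun i _ => Finset.sum_nonneg fun j _ => hM i j
  let K : Set ((ι → ℝ) × ℝ) :=
    (stdSimplex ℝ ι ×ˢ Set.Icc 0 C) ∩ {p | ∀ i, p.2 * p.1 i ≤ (M *ᵥ p.1) i}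
  have hK : IsCompact K := by
    refine ((isCompact_stdSimplex ℝ ι).prod isCompact_Icc).inter_right ?_
    simp only [Set.ofPred_forall]
    refine isClosed_iInter fun i => isClosed_le (by fun_prop) ?_
    exact continuous_finsetSum _ fun j _ => by fun_prop
  have hKne : K.Nonempty := by
    obtain ⟨i⟩ := ‹Nonempty ι›
    refine ⟨(Pi.single i 1, 0), ⟨single_mem_stdSimplex ℝ i, le_rfl, hC0⟩, fun j => ?_⟩
    simpa using hM j i
  obtain ⟨⟨x, μ⟩, ⟨⟨hx, hμ⟩, hsub⟩, hmax⟩ := hK.exists_isMaxOn hKne continuous_snd.continuousOn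
  simp only at hx hμ
  have hsub' : ∀ i, μ * x i ≤ (M *ᵥ x) i := hsub
  have hx0 : x ≠ 0 := by
    rintro rfl
    simpa using hx.2
  have hy : ∀ i, 0 < (P *ᵥ x) i := mulVec_pos hP hx.1 hx0
  have heig : M *ᵥ x = μ • x := by
    by_contra hne
    have hz : ∀ i, 0 < (P *ᵥ (M *ᵥ x - μ • x)) i :=
      mulVec_pos hP (fun i => by simpa using hsub' i) (sub_ne_zero.mpr hne)
    have hzy : P *ᵥ (M *ᵥ x - μ • x) = M *ᵥ (P *ᵥ x) - μ • (P *ᵥ x) := by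
      rw [Matrix.mulVec_sub, Matrix.mulVec_smul, Matrix.mulVec_mulVec, Matrix.mulVec_mulVec, hPM.eq]
    rw [hzy] at hz
    set y := P *ᵥ x with hydef
    obtain ⟨i₀, -, hi₀⟩ := Finset.exists_min_image Finset.univ
      (fun i => (M *ᵥ y - μ • y) i / y i) Finset.univ_nonempty
    set ε := (M *ᵥ y - μ • y) i₀ / y i₀ with hε
    have hεpos : 0 < ε := div_pos (hz i₀) (hy i₀)
    have hsy : 0 < ∑ i, y i := Finset.sum_pos (fun i _ => hy i) Finset.univ_nonempty
    have hmem : (∑ i, y i)⁻¹ • y ∈ stdSimplex ℝ ι := by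
      refine ⟨fun i => mul_nonneg (inv_nonneg.mpr hsy.le) (hy i).le, ?_⟩
      simp only [Pi.smul_apply, smul_eq_mul]
      rw [← Finset.mul_sum, inv_mul_cancel₀ hsy.ne']
    have hsub2 : ∀ i, (μ + ε) * ((∑ i, y i)⁻¹ • y) i ≤ (M *ᵥ ((∑ i, y i)⁻¹ • y)) i := by
      intro i
      have h1 := hi₀ i (Finset.mem_univ i)
      rw [le_div_iff₀ (hy i)] at h1
      simp only [Pi.sub_apply, Pi.smul_apply, smul_eq_mul] at h1
      rw [Matrix.mulVec_smul]
      simp only [Pi.smul_apply, smul_eq_mul]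
      rw [mul_left_comm]
      refine mul_le_mul_of_nonneg_left ?_ (inv_nonneg.mpr hsy.le)
      linarith
    have hle : μ + ε ≤ μ := hmax (a := ((∑ i, y i)⁻¹ • y, μ + ε))
      ⟨⟨hmem, add_nonneg hμ.1 hεpos.le, subeigenvalue_le hM hmem hsub2⟩, hsub2⟩
    linarith
  refine ⟨P *ᵥ x, μ, hy, ?_⟩
  rw [Matrix.mulVec_mulVec, ← hPM.eq, ← Matrix.mulVec_mulVec, heig, Matrix.mulVec_smul]

lemma pow_pos_of_path [DecidableEq ι] {M : Matrix ι ι ℝ} (hM : ∀ i j, 0 ≤ M i j) (k : ℕ)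
    (path : Fin (k + 1) → ι) (h : ∀ l : Fin k, 0 < M (path l.castSucc) (path l.succ)) :
    0 < (M ^ k) (path 0) (path (Fin.last k)) := by
  induction k with
  | zero => simp
  | succ k ih =>
    rw [pow_succ, Matrix.mul_apply]
    refine Finset.sum_pos' (fun l _ => mul_nonneg (pow_nonneg_entry hM k _ _) (hM _ _))
      ⟨path (Fin.last k).castSucc, Finset.mem_univ _, mul_pos ?_ ?_⟩
    · exact ih (fun l => path l.castSucc) fun l => h l.castSucc
    · exact h (Fin.last k)

lemma left_right_eigenvalue_eq [Nonempty ι] {M : Matrix ι ι ℝ} {φ ψ : ι → ℝ} {μ ν : ℝ}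
    (hφ : ∀ i, 0 < φ i) (hψ : ∀ i, 0 < ψ i) (h : M *ᵥ φ = μ • φ) (h' : ψ ᵥ* M = ν • ψ) :
    μ = ν := by
  have h1 := Matrix.dotProduct_mulVec ψ M φ
  rw [h, h', dotProduct_smul, smul_dotProduct] at h1
  have hpos : 0 < ψ ⬝ᵥ φ :=
    Finset.sum_pos (fun i _ => mul_pos (hψ i) (hφ i)) Finset.univ_nonempty
  exact mul_right_cancel₀ hpos.ne' h1

/-- The lower bound of the Donsker–Varadhan formula for the (unnormalized) measure `ψ * φ`, from
`log t ≤ t - 1` with `t = (g j / φ j) / (g i / φ i)`. The logarithmic terms cancel because `φ` and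
`ψ` are eigenvectors for the same eigenvalue. -/
lemma le_sum_of_eigenvectors {M : Matrix ι ι ℝ} (hM : ∀ i j, 0 ≤ M i j) {φ ψ g : ι → ℝ} {μ : ℝ}
    (hφ : ∀ i, 0 < φ i) (hψ : ∀ i, 0 < ψ i) (hg : ∀ i, 0 < g i)
    (h : M *ᵥ φ = μ • φ) (h' : ψ ᵥ* M = μ • ψ) :
    μ * ∑ i, ψ i * φ i ≤ ∑ i, ψ i * φ i * ((M *ᵥ g) i / g i) := by
  have hr : ∀ i, ∑ j, M i j * φ j = μ * φ i := fun i => congrFun h i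
  have hl : ∀ j, ∑ i, ψ i * M i j = μ * ψ j := fun j => congrFun h' j
  let L : ι → ℝ := fun i => Real.log (g i / φ i)
  have key : ∀ i j, ψ i * M i j * φ j * (1 + L j - L i)
      ≤ ψ i * φ i * (M i j * g j / g i) := by
    intro i j
    have hlog : L j - L i ≤ (g j / φ j) / (g i / φ i) - 1 := by
      have h1 : 0 < g j / φ j := div_pos (hg j) (hφ j)
      have h2 : 0 < g i / φ i := div_pos (hg i) (hφ i)
      simp only [L]
      rw [← Real.log_div h1.ne' h2.ne']
      exact Real.log_le_sub_one_of_pos (div_pos h1 h2)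
    calc ψ i * M i j * φ j * (1 + L j - L i)
        ≤ ψ i * M i j * φ j * ((g j / φ j) / (g i / φ i)) := by
          refine mul_le_mul_of_nonneg_left (by linarith) ?_
          exact mul_nonneg (mul_nonneg (hψ i).le (hM i j)) (hφ j).le
      _ = ψ i * φ i * (M i j * g j / g i) := by
          have := (hφ i).ne'
          have := (hφ j).ne'
          have := (hg i).ne'
          field_simp
  calc μ * ∑ i, ψ i * φ i
      = ∑ i, ∑ j, ψ i * M i j * φ j * (1 + L j - L i) := by
        have e1 : ∑ i, ∑ j, ψ i * M i j * φ j * (1 + L j)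
            = ∑ j, μ * ψ j * φ j * (1 + L j) := by
          rw [Finset.sum_comm]
          refine Finset.sum_congr rfl fun j _ => ?_
          rw [← hl j, Finset.sum_mul, Finset.sum_mul]
        have e2 : ∑ i, ∑ j, ψ i * M i j * φ j * L i = ∑ i, μ * ψ i * φ i * L i := by
          refine Finset.sum_congr rfl fun i _ => ?_
          rw [show μ * ψ i * φ i * L i = (ψ i * L i) * (μ * φ i) by ring, ← hr i, Finset.mul_sum]
          exact Finset.sum_congr rfl fun j _ => by ring
        simp only [mul_sub, Finset.sum_sub_distrib]
        rw [e1, e2, ← Finset.sum_sub_distrib, Finset.mul_sum]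
        exact Finset.sum_congr rfl fun i _ => by ring
    _ ≤ ∑ i, ∑ j, ψ i * φ i * (M i j * g j / g i) :=
        Finset.sum_le_sum fun i _ => Finset.sum_le_sum fun j _ => key i j
    _ = ∑ i, ψ i * φ i * ((M *ᵥ g) i / g i) := by
        refine Finset.sum_congr rfl fun i _ => ?_
        rw [← Finset.mul_sum, ← Finset.sum_div]
        rfl

end DonskerVaradhan

open DonskerVaradhan in
/-- **Principal eigenvalue problem / Donsker–Varadhan representation.**
For a conservative irreducible rate matrix `Q` on the finite set `S = Fin N` and
`B : S → ℝ`, the operator `(A g)(i) = B i * g i + (Q g)(i)` has a strictly positive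
eigenfunction `φ` with eigenvalue `lam`, the eigenvalue is unique among those with
positive eigenfunctions, and `lam` has the variational (Donsker–Varadhan) representation. -/
theorem principal_eigenvalue_donsker_varadhan
    (N : ℕ) (hN : 0 < N) (Q : Fin N → Fin N → ℝ) (B : Fin N → ℝ)
    (hoff : ∀ i j, i ≠ j → 0 ≤ Q i j)
    (hcons : ∀ i, ∑ j, Q i j = 0)
    (hirr : ∀ i j : Fin N, i ≠ j → ∃ k : ℕ, ∃ path : Fin (k + 1) → Fin N,
      path 0 = i ∧ path (Fin.last k) = j ∧
      ∀ l : Fin k, 0 < Q (path l.castSucc) (path l.succ)) :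
    ∃ φ : Fin N → ℝ, ∃ lam : ℝ,
      (∀ i, 0 < φ i) ∧
      (∀ i, B i * φ i + ∑ j, Q i j * (φ j - φ i) = lam * φ i) ∧
      (∀ lam' : ℝ, (∃ ψ : Fin N → ℝ, (∀ i, 0 < ψ i) ∧
          ∀ i, B i * ψ i + ∑ j, Q i j * (ψ j - ψ i) = lam' * ψ i) → lam' = lam) ∧
      lam = sSup {r : ℝ | ∃ π : Fin N → ℝ, (∀ i, 0 ≤ π i) ∧ (∑ i, π i = 1) ∧
        r = sInf {s : ℝ | ∃ g : Fin N → ℝ, (∀ i, 0 < g i) ∧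
          s = ∑ i, π i * (B i * g i + ∑ j, Q i j * (g j - g i)) / g i}} ∧
      lam = sSup {r : ℝ | ∃ π : Fin N → ℝ, (∀ i, 0 ≤ π i) ∧ (∑ i, π i = 1) ∧
        r = (∑ i, B i * π i) -
          (- sInf {s : ℝ | ∃ g : Fin N → ℝ, (∀ i, 0 < g i) ∧
            s = ∑ i, π i * (∑ j, Q i j * (g j - g i)) / g i})} := by
  have : Nonempty (Fin N) := ⟨⟨0, hN⟩⟩
  -- `c` makes the diagonal of the matrix of `A + c` nonnegative.
  set c : ℝ := ∑ i, |Q i i + B i| with hc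
  let M : Matrix (Fin N) (Fin N) ℝ :=
    Matrix.of fun i j => Q i j + if i = j then B i + c else 0
  have hMdef : ∀ i j, M i j = Q i j + if i = j then B i + c else 0 := fun _ _ => rfl
  have hM : ∀ i j, 0 ≤ M i j := by
    intro i j
    rw [hMdef]
    split_ifs with hij
    · subst hij
      have h1 : |Q i i + B i| ≤ c :=
        Finset.single_le_sum (f := fun i => |Q i i + B i|) (fun k _ => abs_nonneg _)
          (Finset.mem_univ i)
      linarith [neg_abs_le (Q i i + B i)]
    · simpa using hoff i j hij
  have hQg : ∀ (g : Fin N → ℝ) i, ∑ j, Q i j * (g j - g i) = ∑ j, Q i j * g j := by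
    intro g i
    simp only [mul_sub, Finset.sum_sub_distrib]
    rw [← Finset.sum_mul, hcons, zero_mul, sub_zero]
  have hMg : ∀ (g : Fin N → ℝ) i,
      (M *ᵥ g) i = B i * g i + ∑ j, Q i j * (g j - g i) + c * g i := by
    intro g i
    rw [hQg]
    simp only [Matrix.mulVec, dotProduct, hMdef, add_mul, Finset.sum_add_distrib, ite_mul, zero_mul,
      Finset.sum_ite_eq, Finset.mem_univ, if_true]
    ring
  have hMirr : ∀ i j, ∃ k : ℕ, 0 < (M ^ k) i j := by
    intro i j
    by_cases hij : i = j
    · exact ⟨0, by simp [hij]⟩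
    · obtain ⟨k, path, h0, hl, hp⟩ := hirr i j hij
      refine ⟨k, ?_⟩
      rw [← h0, ← hl]
      refine pow_pos_of_path hM k path fun l => ?_
      -- `Q` and `M` differ only on the diagonal, where `Q` is nonpositive by conservativity.
      have hne : path l.castSucc ≠ path l.succ := by
        intro heq
        have h1 := hp l
        rw [← heq] at h1
        have h2 := hcons (path l.castSucc)
        rw [← Finset.add_sum_erase _ _ (Finset.mem_univ (path l.castSucc))] at h2
        have h3 : 0 ≤ ∑ j ∈ Finset.univ.erase (path l.castSucc), Q (path l.castSucc) j :=
          Finset.sum_nonneg fun j hj => hoff _ j (Finset.ne_of_mem_erase hj).symm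
        linarith
      rw [hMdef, if_neg hne, add_zero]
      exact hp l
  obtain ⟨φ, μ, hφ, hφe⟩ := exists_pos_eigenvector hM hMirr
  obtain ⟨ψ, ν, hψ, hψe⟩ := exists_pos_eigenvector (M := Mᵀ) (fun i j => hM j i)
    (fun i j => by
      obtain ⟨k, hk⟩ := hMirr j i
      exact ⟨k, by rwa [← Matrix.transpose_pow, Matrix.transpose_apply]⟩)
  rw [Matrix.mulVec_transpose] at hψe
  have huniq := fun {χ : Fin N → ℝ} {κ : ℝ} (hχ : ∀ i, 0 < χ i) (h : M *ᵥ χ = κ • χ) =>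
    left_right_eigenvalue_eq hχ hψ h hψe
  obtain rfl := huniq hφ hφe
  have hAφ : ∀ i, B i * φ i + ∑ j, Q i j * (φ j - φ i) = (μ - c) * φ i := by
    intro i
    have h1 := congrFun hφe i
    rw [hMg, Pi.smul_apply, smul_eq_mul] at h1
    linarith
  -- The infima range over nonempty sets bounded below, so `sInf` is the honest infimum.
  have hbdd : ∀ π : Fin N → ℝ, (∀ i, 0 ≤ π i) → BddBelow {s : ℝ | ∃ g : Fin N → ℝ,
      (∀ i, 0 < g i) ∧ s = ∑ i, π i * (∑ j, Q i j * (g j - g i)) / g i} := by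
    intro π hπ
    refine ⟨∑ i, π i * Q i i, ?_⟩
    rintro s ⟨g, hg, rfl⟩
    refine Finset.sum_le_sum fun i _ => ?_
    rw [mul_div_assoc, hQg]
    refine mul_le_mul_of_nonneg_left ?_ (hπ i)
    rw [le_div_iff₀ (hg i), ← Finset.add_sum_erase _ _ (Finset.mem_univ i)]
    have : 0 ≤ ∑ j ∈ Finset.univ.erase i, Q i j * g j :=
      Finset.sum_nonneg fun j hj => mul_nonneg (hoff i j (Finset.ne_of_mem_erase hj).symm) (hg j).le
    linarith
  have hsplit : ∀ (π g : Fin N → ℝ), (∀ i, 0 < g i) →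
      ∑ i, π i * (B i * g i + ∑ j, Q i j * (g j - g i)) / g i
        = ∑ i, B i * π i + ∑ i, π i * (∑ j, Q i j * (g j - g i)) / g i := by
    intro π g hg
    rw [← Finset.sum_add_distrib]
    refine Finset.sum_congr rfl fun i _ => ?_
    rw [mul_add, add_div]
    congr 1
    have := (hg i).ne'
    field_simp
  have himage : ∀ π : Fin N → ℝ, {s : ℝ | ∃ g : Fin N → ℝ, (∀ i, 0 < g i) ∧
        s = ∑ i, π i * (B i * g i + ∑ j, Q i j * (g j - g i)) / g i}
      = (fun t => ∑ i, B i * π i + t) '' {s : ℝ | ∃ g : Fin N → ℝ,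
        (∀ i, 0 < g i) ∧ s = ∑ i, π i * (∑ j, Q i j * (g j - g i)) / g i} := by
    intro π
    ext s
    constructor
    · rintro ⟨g, hg, rfl⟩
      exact ⟨_, ⟨g, hg, rfl⟩, (hsplit π g hg).symm⟩
    · rintro ⟨_, ⟨g, hg, rfl⟩, rfl⟩
      exact ⟨g, hg, (hsplit π g hg).symm⟩
  have hinf : ∀ π : Fin N → ℝ, (∀ i, 0 ≤ π i) →
      sInf {s : ℝ | ∃ g : Fin N → ℝ, (∀ i, 0 < g i) ∧
        s = ∑ i, π i * (B i * g i + ∑ j, Q i j * (g j - g i)) / g i}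
      = ∑ i, B i * π i - (- sInf {s : ℝ | ∃ g : Fin N → ℝ,
        (∀ i, 0 < g i) ∧ s = ∑ i, π i * (∑ j, Q i j * (g j - g i)) / g i}) := by
    intro π hπ
    rw [himage, sub_neg_eq_add]
    have hne : {s : ℝ | ∃ g : Fin N → ℝ, (∀ i, 0 < g i) ∧
        s = ∑ i, π i * (∑ j, Q i j * (g j - g i)) / g i}.Nonempty := ⟨_, φ, hφ, rfl⟩
    exact ((OrderIso.addLeft (∑ i, B i * π i)).map_csInf' hne (hbdd π hπ)).symm
  have hφval : ∀ π : Fin N → ℝ, ∑ i, π i = 1 →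
      μ - c = ∑ i, π i * (B i * φ i + ∑ j, Q i j * (φ j - φ i)) / φ i := by
    intro π hπ
    calc μ - c = ∑ i, π i * (μ - c) := by rw [← Finset.sum_mul, hπ, one_mul]
      _ = _ := by
        refine Finset.sum_congr rfl fun i _ => ?_
        rw [hAφ, ← mul_assoc, mul_div_cancel_right₀ _ (hφ i).ne']
  have hfirst : μ - c = sSup {r : ℝ | ∃ π : Fin N → ℝ, (∀ i, 0 ≤ π i) ∧ (∑ i, π i = 1) ∧
        r = sInf {s : ℝ | ∃ g : Fin N → ℝ, (∀ i, 0 < g i) ∧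
          s = ∑ i, π i * (B i * g i + ∑ j, Q i j * (g j - g i)) / g i}} := by
    symm
    refine IsGreatest.csSup_eq ⟨?_, ?_⟩
    · set Z := ∑ i, ψ i * φ i with hZ
      have hZpos : 0 < Z :=
        Finset.sum_pos (fun i _ => mul_pos (hψ i) (hφ i)) Finset.univ_nonempty
      have hsum : ∑ i, ψ i * φ i / Z = 1 := by rw [← Finset.sum_div, div_self hZpos.ne']
      refine ⟨fun i => ψ i * φ i / Z,
        fun i => div_nonneg (mul_nonneg (hψ i).le (hφ i).le) hZpos.le, hsum, ?_⟩
      symm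
      refine IsLeast.csInf_eq ⟨⟨φ, hφ, hφval _ hsum⟩, ?_⟩
      rintro s ⟨g, hg, rfl⟩
      have hkey := le_sum_of_eigenvectors hM hφ hψ hg hφe hψe
      have heq : ∑ i, ψ i * φ i / Z * (B i * g i + ∑ j, Q i j * (g j - g i)) / g i
          = (∑ i, ψ i * φ i * ((M *ᵥ g) i / g i)) / Z - c := by
        calc _ = ∑ i, (ψ i * φ i * ((M *ᵥ g) i / g i) / Z - ψ i * φ i / Z * c) := by
              refine Finset.sum_congr rfl fun i _ => ?_
              rw [hMg]
              have := (hg i).ne'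
              field_simp
              ring
          _ = _ := by
              rw [Finset.sum_sub_distrib, ← Finset.sum_mul, hsum, one_mul, Finset.sum_div]
      rw [heq]
      exact sub_le_sub_right ((le_div_iff₀ hZpos).mpr hkey) c
    · rintro r ⟨π, hπ, hπ1, rfl⟩
      refine csInf_le ?_ ⟨φ, hφ, hφval π hπ1⟩
      rw [himage]
      exact (OrderIso.addLeft (∑ i, B i * π i)).monotone.map_bddBelow (hbdd π hπ)
  refine ⟨φ, μ - c, hφ, hAφ, ?_, hfirst, ?_⟩
  · rintro lam' ⟨χ, hχ, hχe⟩
    have h1 : lam' + c = μ := huniq hχ (by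
      funext i
      rw [hMg, hχe, Pi.smul_apply, smul_eq_mul]
      ring)
    linarith
  · rw [hfirst]
    congr 1
    ext r
    refine exists_congr fun π => and_congr_right fun hπ => and_congr_right fun _ => ?_
    rw [hinf π hπ]
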